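/- Let V be a finite-dimensional complex vector space with a nondegenerate Hermitian sesquilinear form ⟨·,·⟩, let G be a group acting linearly on V, and let G₁, G₂ ≤ G be subgroups. Suppose V = ⊕_{i∈I} V_i and V = ⊕_{j∈J} W_j are decompositions into nonzero, pairwise orthogonal invariant subspaces which are irreducible and pairwise non-isomorphic as G₁-representations (respectively G₂-representations). If there exists an index i₀ ∈ I such that for every j ∈ J there are v ∈ V_{i₀} and w ∈ W_j with ⟨v,w⟩ ≠ 0, then V is irreducible as a representation of G. -/

import Mathlib

/-!
A subrepresentation of a multiplicity-free direct sum of irreducibles is the sum of those summands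
it meets, so for each summand `A i` and each invariant `U` either `A i ≤ U` or the projection of `U`
to `A i` vanishes (`le_or_proj_eq_zero`). In the latter case `U` is orthogonal to `A i`, because the
summands are pairwise orthogonal.

Let `U` be `G`-invariant and apply this to both decompositions. If `V_{i₀} ≤ U`, then no `W_j` is
orthogonal to `U`, so every `W_j` lies in `U` and `U = V`. Otherwise `U` is orthogonal to `V_{i₀}`,
so it contains no `W_j`, all its projections to the `W_j` vanish, and `U = 0`. The form need not be
`G`-invariant for this.

The dichotomy is proved by taking `M ≤ U` minimal among invariant subspaces with nonzero projection
to `A i`. If `M` also projected nontrivially to `A k`, `k ≠ i`, minimality would force both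
projections of `M` to have the same kernel, giving `A i ≅ M / ker ≅ A k`. Hence `M = A i`.
-/

/-- The projections attached to an internal direct sum, as endomorphisms of the ambient space. -/
lemma exists_proj {V ι : Type*} [AddCommGroup V] [Module ℂ V] [DecidableEq ι]
    (A : ι → Submodule ℂ V) (hA : DirectSum.IsInternal A) :
    ∃ π : ι → V →ₗ[ℂ] V, (∀ i v, π i v ∈ A i) ∧ (∀ i, ∀ v ∈ A i, π i v = v) ∧
      (∀ i k, k ≠ i → ∀ v ∈ A k, π i v = 0) ∧ (∀ v, (∀ i, π i v = 0) → v = 0) := by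
  let e := LinearEquiv.ofBijective (DirectSum.coeLinearMap A) hA
  have he : ∀ k (v : V) (hv : v ∈ A k), e.symm v = DirectSum.lof ℂ ι (fun i => A i) k ⟨v, hv⟩ := by
    intro k v hv
    rw [LinearEquiv.symm_apply_eq]
    exact (DirectSum.coeLinearMap_lof A k ⟨v, hv⟩).symm
  refine ⟨fun i => (A i).subtype ∘ₗ DirectSum.component ℂ ι (fun i => A i) i ∘ₗ e.symm.toLinearMap,
    fun i v => ?_, fun i v hv => ?_, fun i k hk v hv => ?_, fun v h => ?_⟩
  · simp
  · simp [he i v hv]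
  · simp only [LinearMap.comp_apply, LinearEquiv.coe_coe, he k v hv]
    rw [DirectSum.component.of, dif_neg hk]
    simp
  · rw [← e.symm.map_eq_zero_iff]
    refine DFinsupp.ext fun i => Subtype.ext ?_
    exact h i

/-- A functional vanishing on all summands but `A i` factors through the projection to `A i`. -/
lemma apply_eq_apply_proj {V ι : Type*} [AddCommGroup V] [Module ℂ V]
    (A : ι → Submodule ℂ V) (htop : iSup A = ⊤) (π : ι → V →ₗ[ℂ] V)
    (hself : ∀ i, ∀ v ∈ A i, π i v = v) (hother : ∀ i k, k ≠ i → ∀ v ∈ A k, π i v = 0)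
    (i : ι) (φ : V →ₗ[ℂ] ℂ) (hφ : ∀ k, k ≠ i → ∀ v ∈ A k, φ v = 0) (v : V) :
    φ v = φ (π i v) := by
  have hv : v ∈ iSup A := htop ▸ Submodule.mem_top
  induction hv using Submodule.iSup_induction' with
  | mem k x hx =>
    by_cases hk : k = i
    · subst hk; rw [hself k x hx]
    · rw [hφ k hk x hx, hother i k hk x hx, map_zero]
  | zero => simp
  | add x y _ _ hx hy => simp [hx, hy]

/-- The projections of a decomposition into invariant subspaces are equivariant. -/
lemma proj_comm {V ι : Type*} [AddCommGroup V] [Module ℂ V]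
    (A : ι → Submodule ℂ V) (htop : iSup A = ⊤) (π : ι → V →ₗ[ℂ] V)
    (hself : ∀ i, ∀ v ∈ A i, π i v = v) (hother : ∀ i k, k ≠ i → ∀ v ∈ A k, π i v = 0)
    (T : V →ₗ[ℂ] V) (hT : ∀ i, ∀ v ∈ A i, T v ∈ A i) (i : ι) (v : V) :
    π i (T v) = T (π i v) := by
  have hv : v ∈ iSup A := htop ▸ Submodule.mem_top
  induction hv using Submodule.iSup_induction' with
  | mem k x hx =>
    by_cases hk : k = i
    · subst hk; rw [hself k x hx, hself k _ (hT k x hx)]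
    · rw [hother i k hk x hx, hother i k hk _ (hT k x hx), map_zero]
  | zero => simp
  | add x y _ _ hx hy => simp [hx, hy]

/-- In a multiplicity-free decomposition, an invariant subspace either contains a given irreducible
summand or projects to zero in it. -/
lemma le_or_proj_eq_zero {V G ι : Type*} [AddCommGroup V] [Module ℂ V] [FiniteDimensional ℂ V]
    [Group G] (ρ : Representation ℂ G V) (H : Subgroup G)
    (A : ι → Submodule ℂ V) (htop : iSup A = ⊤) (π : ι → V →ₗ[ℂ] V)
    (hmem : ∀ i v, π i v ∈ A i)
    (hself : ∀ i, ∀ v ∈ A i, π i v = v) (hother : ∀ i k, k ≠ i → ∀ v ∈ A k, π i v = 0)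
    (hzero : ∀ v, (∀ i, π i v = 0) → v = 0)
    (hinv : ∀ i, ∀ g ∈ H, ∀ v ∈ A i, ρ g v ∈ A i)
    (hirr : ∀ i, ∀ U : Submodule ℂ V, U ≤ A i →
      (∀ g ∈ H, ∀ v ∈ U, ρ g v ∈ U) → U = ⊥ ∨ U = A i)
    (hnoniso : ∀ i i', i ≠ i' →
      ¬ ∃ f : (A i) →ₗ[ℂ] V, Function.Injective f ∧ LinearMap.range f = A i' ∧
        ∀ g ∈ H, ∀ (v : V) (hv : v ∈ A i) (hgv : ρ g v ∈ A i),
          f ⟨ρ g v, hgv⟩ = ρ g (f ⟨v, hv⟩))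
    (U : Submodule ℂ V) (hU : ∀ g ∈ H, ∀ v ∈ U, ρ g v ∈ U) (i : ι) :
    A i ≤ U ∨ ∀ u ∈ U, π i u = 0 := by
  have hcomm : ∀ k, ∀ g ∈ H, ∀ v, π k (ρ g v) = ρ g (π k v) := fun k g hg v =>
    proj_comm A htop π hself hother (ρ g) (fun i v hv => hinv i g hg v hv) k v
  -- The image of an invariant subspace under a projection is zero or the whole summand.
  have himg : ∀ k, ∀ N : Submodule ℂ V, (∀ g ∈ H, ∀ v ∈ N, ρ g v ∈ N) →
      (∀ u ∈ N, π k u = 0) ∨ N.map (π k) = A k := by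
    intro k N hN
    refine (hirr k (N.map (π k)) ?_ ?_).imp_left fun h u hu => ?_
    · rintro _ ⟨u, -, rfl⟩
      exact hmem k u
    · rintro g hg _ ⟨u, hu, rfl⟩
      exact ⟨ρ g u, hN g hg u hu, hcomm k g hg u⟩
    · have : π k u ∈ N.map (π k) := ⟨u, hu, rfl⟩
      rwa [h, Submodule.mem_bot] at this
  by_contra! hcon
  obtain ⟨hnot, u₀, hu₀, hne₀⟩ := hcon
  obtain ⟨M, ⟨hMU, hMinv, u, huM, hu⟩, hmin⟩ := (wellFounded_lt (α := Submodule ℂ V)).has_min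
    {N | N ≤ U ∧ (∀ g ∈ H, ∀ v ∈ N, ρ g v ∈ N) ∧ ∃ u ∈ N, π i u ≠ 0}
    ⟨U, le_rfl, hU, u₀, hu₀, hne₀⟩
  have hMi : M.map (π i) = A i := (himg i M hMinv).resolve_left fun h => hu (h u huM)
  have hMk : ∀ k, k ≠ i → ∀ x ∈ M, π k x = 0 := by
    intro k hk
    by_contra hcon
    have hMk := (himg k M hMinv).resolve_left hcon
    push Not at hcon
    obtain ⟨y, hyM, hy⟩ := hcon
    have hki : ∀ x ∈ M, π k x = 0 → π i x = 0 := by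
      intro x hx hkx
      by_contra hix
      refine hmin (M ⊓ LinearMap.ker (π k)) ⟨inf_le_left.trans hMU, ?_, x, ⟨hx, hkx⟩, hix⟩
        (lt_of_le_of_ne inf_le_left fun h => hy ?_)
      · rintro g hg v ⟨hv, hkv⟩
        refine ⟨hMinv g hg v hv, ?_⟩
        exact (hcomm k g hg v).trans (by rw [LinearMap.mem_ker.mp hkv, map_zero])
      · rw [← h] at hyM
        exact hyM.2
    have hik : ∀ x ∈ M, π i x = 0 → π k x = 0 := by
      rcases himg k (M ⊓ LinearMap.ker (π i)) (by
        rintro g hg v ⟨hv, hiv⟩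
        refine ⟨hMinv g hg v hv, ?_⟩
        exact (hcomm i g hg v).trans (by rw [LinearMap.mem_ker.mp hiv, map_zero])) with h | h
      · exact fun x hx hix => h x ⟨hx, hix⟩
      · -- Otherwise `M ∩ ker π i` already surjects onto `A k`; as it contains `M ∩ ker π k`,
        -- it is all of `M`, against `π i u ≠ 0`.
        exfalso
        have : π k u ∈ (M ⊓ LinearMap.ker (π i)).map (π k) := h ▸ hmem k u
        obtain ⟨w, ⟨hwM, hwi⟩, hw⟩ := this
        have h1 := hki (u - w) (M.sub_mem huM hwM) (by rw [map_sub, hw, sub_self])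
        rw [map_sub, LinearMap.mem_ker.mp hwi, sub_zero] at h1
        exact hu h1
    -- With equal kernels on `M`, composing a linear section of `π i` with `π k` is equivariant.
    let p : M →ₗ[ℂ] A i := (π i ∘ₗ M.subtype).codRestrict (A i) fun x => hmem i x
    have hp : LinearMap.range p = ⊤ := by
      rw [LinearMap.range_eq_top]
      rintro ⟨a, ha⟩
      rw [← hMi] at ha
      obtain ⟨x, hx, rfl⟩ := ha
      exact ⟨⟨x, hx⟩, rfl⟩
    obtain ⟨s, hs⟩ := p.exists_rightInverse_of_surjective hp
    have hs' : ∀ a : A i, π i (s a) = a := fun a =>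
      congrArg Subtype.val (LinearMap.congr_fun hs a)
    refine hnoniso i k hk.symm ⟨π k ∘ₗ M.subtype ∘ₗ s, ?_, ?_, ?_⟩
    · rw [← LinearMap.ker_eq_bot, LinearMap.ker_eq_bot']
      intro a ha
      have h1 := hki (s a) (s a).2 ha
      rw [hs'] at h1
      exact Subtype.ext h1
    · apply le_antisymm
      · rintro _ ⟨a, rfl⟩
        exact hmem k _
      · intro b hb
        rw [← hMk] at hb
        obtain ⟨x, hx, rfl⟩ := hb
        refine ⟨⟨π i x, hmem i x⟩, ?_⟩
        have h1 := hik (s ⟨π i x, hmem i x⟩ - x) (M.sub_mem (Subtype.prop _) hx)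
          (by rw [map_sub, hs', sub_self])
        rw [map_sub, sub_eq_zero] at h1
        exact h1
    · intro g hg v hv hgv
      have h1 := hik (s ⟨ρ g v, hgv⟩ - ρ g (s ⟨v, hv⟩))
        (M.sub_mem (Subtype.prop _) (hMinv g hg _ (Subtype.prop _)))
        (by rw [map_sub, hcomm i g hg, hs', hs', sub_self])
      rw [map_sub, sub_eq_zero, hcomm k g hg] at h1
      exact h1
  apply hnot
  rw [← hMi]
  rintro _ ⟨x, hx, rfl⟩
  have hxi : x - π i x = 0 := hzero _ fun k => by
    by_cases hk : k = i
    · subst hk; rw [map_sub, hself k _ (hmem k x), sub_self]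
    · rw [map_sub, hMk k hk x hx, hother k i (Ne.symm hk) _ (hmem i x), sub_self]
  rw [sub_eq_zero] at hxi
  rw [← hxi]
  exact hMU hx


theorem stmt2 {V G : Type*} [AddCommGroup V] [Module ℂ V] [FiniteDimensional ℂ V] [Group G]
    (ρ : Representation ℂ G V)
    -- a nondegenerate Hermitian sesquilinear form on `V`
    (B : V →ₗ⋆[ℂ] V →ₗ[ℂ] ℂ)
    (hherm : ∀ v w : V, B w v = starRingEnd ℂ (B v w))
    (hnondeg : ∀ v : V, (∀ w : V, B v w = 0) → v = 0)
    (G₁ G₂ : Subgroup G) {I J : Type*} [DecidableEq I] [DecidableEq J]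
    (Vfam : I → Submodule ℂ V) (Wfam : J → Submodule ℂ V)
    (hVint : DirectSum.IsInternal Vfam) (hWint : DirectSum.IsInternal Wfam)
    -- nonzero
    (hVne : ∀ i, Vfam i ≠ ⊥) (hWne : ∀ j, Wfam j ≠ ⊥)
    -- pairwise orthogonal
    (hVorth : ∀ i i', i ≠ i' → ∀ v ∈ Vfam i, ∀ w ∈ Vfam i', B v w = 0)
    (hWorth : ∀ j j', j ≠ j' → ∀ v ∈ Wfam j, ∀ w ∈ Wfam j', B v w = 0)
    -- invariance
    (hVinv : ∀ i, ∀ g ∈ G₁, ∀ v ∈ Vfam i, ρ g v ∈ Vfam i)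
    (hWinv : ∀ j, ∀ g ∈ G₂, ∀ v ∈ Wfam j, ρ g v ∈ Wfam j)
    -- irreducibility of each summand
    (hVirr : ∀ i, ∀ U : Submodule ℂ V, U ≤ Vfam i →
      (∀ g ∈ G₁, ∀ v ∈ U, ρ g v ∈ U) → U = ⊥ ∨ U = Vfam i)
    (hWirr : ∀ j, ∀ U : Submodule ℂ V, U ≤ Wfam j →
      (∀ g ∈ G₂, ∀ v ∈ U, ρ g v ∈ U) → U = ⊥ ∨ U = Wfam j)
    -- pairwise non-isomorphic as subrepresentations
    (hVnoniso : ∀ i i', i ≠ i' →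
      ¬ ∃ f : (Vfam i) →ₗ[ℂ] V, Function.Injective f ∧ LinearMap.range f = Vfam i' ∧
        ∀ g ∈ G₁, ∀ (v : V) (hv : v ∈ Vfam i) (hgv : ρ g v ∈ Vfam i),
          f ⟨ρ g v, hgv⟩ = ρ g (f ⟨v, hv⟩))
    (hWnoniso : ∀ j j', j ≠ j' →
      ¬ ∃ f : (Wfam j) →ₗ[ℂ] V, Function.Injective f ∧ LinearMap.range f = Wfam j' ∧
        ∀ g ∈ G₂, ∀ (v : V) (hv : v ∈ Wfam j) (hgv : ρ g v ∈ Wfam j),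
          f ⟨ρ g v, hgv⟩ = ρ g (f ⟨v, hv⟩))
    -- there is an index `i₀` pairing nontrivially with every `Wfam j`
    (hi₀ : ∃ i₀ : I, ∀ j : J, ∃ v ∈ Vfam i₀, ∃ w ∈ Wfam j, B v w ≠ 0) :
    -- conclusion: `V` is irreducible as a `G`-representation
    ∀ U : Submodule ℂ V, (∀ g : G, ∀ v ∈ U, ρ g v ∈ U) → U = ⊥ ∨ U = ⊤ := by
  intro U hU
  obtain ⟨i₀, hi₀⟩ := hi₀
  have hVtop := hVint.submodule_iSup_eq_top
  have hWtop := hWint.submodule_iSup_eq_top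
  obtain ⟨π, hπm, hπs, hπo, hπz⟩ := exists_proj Vfam hVint
  obtain ⟨σ, hσm, hσs, hσo, hσz⟩ := exists_proj Wfam hWint
  have hW := le_or_proj_eq_zero ρ G₂ Wfam hWtop σ hσm hσs hσo hσz hWinv hWirr hWnoniso U
    fun g _ => hU g
  rcases le_or_proj_eq_zero ρ G₁ Vfam hVtop π hπm hπs hπo hπz hVinv hVirr hVnoniso U
    (fun g _ => hU g) i₀ with h | h
  · right
    rw [eq_top_iff, ← hWtop, iSup_le_iff]
    intro j
    refine (hW j).resolve_right fun hj => ?_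
    obtain ⟨v, hv, w, hw, hne⟩ := hi₀ j
    apply hne
    have h0 : B w v = 0 := by
      rw [apply_eq_apply_proj Wfam hWtop σ hσs hσo j (B w)
        (fun k hk x hx => hWorth j k hk.symm w hw x hx), hj v (h hv), map_zero]
    rw [hherm w v, h0, map_zero]
  · left
    rw [Submodule.eq_bot_iff]
    refine fun u hu => hσz u fun j => (hW j).resolve_left (fun hj => ?_) u hu
    obtain ⟨v, hv, w, hw, hne⟩ := hi₀ j
    apply hne
    rw [apply_eq_apply_proj Vfam hVtop π hπs hπo i₀ (B v)
      (fun k hk x hx => hVorth i₀ k hk.symm v hv x hx), h w (hj hw), map_zero]
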